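/- arXiv:math/0310099 — 2 statements merged into one kernel-verified Lean document; each statement's English description precedes it below -/
import Mathlib

section
/- For integers p and q with 2 ≤ p < q, the ideal of the Laurent polynomial ring ℤ[t, t⁻¹] generated by 𝔭_p(t)² and (t − 1)·𝔭_p(t) is not equal to the ideal generated by 𝔭_q(t)² and (t − 1)·𝔭_q(t). -/
open LaurentPolynomial

/-- The Laurent polynomial `𝔭_p(t) = Σ_{k=0}^{p} t^(p²−kp) − Σ_{k=0}^{p−1} t^(k(p+1)+1)`
in `ℤ[t, t⁻¹]`, where `t = T 1`. -/
noncomputable def frakP (p : ℕ) : LaurentPolynomial ℤ :=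
  ∑ k ∈ Finset.range (p + 1), T ((p : ℤ) ^ 2 - (k : ℤ) * p) -
    ∑ k ∈ Finset.range p, T ((k : ℤ) * (p + 1) + 1)

theorem evalFrakP (p : ℕ) (u : ℂˣ) :
    eval₂ (Int.castRingHom ℂ) u (frakP p) * ((1 - (u : ℂ) ^ p) * (1 - (u : ℂ) ^ (p + 1))) =
      (1 - (u : ℂ) ^ (p * (p + 1))) * (1 - (u : ℂ)) := by
  have h : eval₂ (Int.castRingHom ℂ) u (frakP p) =
      ∑ k ∈ Finset.range (p + 1), ((u : ℂ) ^ p) ^ k -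
        (u : ℂ) * ∑ k ∈ Finset.range p, ((u : ℂ) ^ (p + 1)) ^ k := by
    unfold frakP
    rw [map_sub, map_sum, map_sum, Finset.mul_sum]
    congr 1
    · rw [← Finset.sum_range_reflect]
      apply Finset.sum_congr rfl
      intro k hk
      have hk' : k ≤ p := by simpa [Nat.lt_succ_iff] using hk
      rw [eval₂_T]
      have : (p : ℤ) ^ 2 - ((p + 1 - 1 - k : ℕ) : ℤ) * p = ((p * k : ℕ) : ℤ) := by
        rw [Nat.add_sub_cancel, Nat.cast_sub hk']
        push_cast
        ring
      rw [this, zpow_natCast, Units.val_pow_eq_pow_val, pow_mul]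
    · apply Finset.sum_congr rfl
      intro k hk
      rw [eval₂_T]
      have : (k : ℤ) * (p + 1) + 1 = (((p + 1) * k + 1 : ℕ) : ℤ) := by
        push_cast
        ring
      rw [this, zpow_natCast, Units.val_pow_eq_pow_val, pow_succ, pow_mul, mul_comm]
  have h1 := geom_sum_mul_neg ((u : ℂ) ^ p) (p + 1)
  have h2 := geom_sum_mul_neg ((u : ℂ) ^ (p + 1)) p
  rw [← pow_mul] at h1 h2
  rw [mul_comm (p + 1) p] at h2
  rw [h]
  linear_combination (1 - (u : ℂ) ^ (p + 1)) * h1 - (u : ℂ) * (1 - (u : ℂ) ^ p) * h2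

/-- For `2 ≤ p < q`, the ideals of `ℤ[t, t⁻¹]` generated by `𝔭_p(t)²` and
`(t − 1)𝔭_p(t)`, respectively by `𝔭_q(t)²` and `(t − 1)𝔭_q(t)`, are distinct. -/
theorem orderIdeals_distinct (p q : ℕ) (hp : 2 ≤ p) (hpq : p < q) :
    Ideal.span {frakP p ^ 2, (T 1 - 1) * frakP p} ≠
      Ideal.span {frakP q ^ 2, (T 1 - 1) * frakP q} := by
  intro hI
  have hn : q * (q + 1) ≠ 0 := Nat.mul_ne_zero (by omega) (by omega)
  have hz := Complex.isPrimitiveRoot_exp (q * (q + 1)) hn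
  obtain ⟨u, hu⟩ := hz.isUnit hn
  rw [← hu] at hz
  have ne : ∀ m : ℕ, m ≠ 0 → m < q * (q + 1) → 1 - (u : ℂ) ^ m ≠ 0 := fun m h0 hm h =>
    hz.pow_ne_one_of_pos_of_lt h0 hm (sub_eq_zero.mp h).symm
  have hq0 : eval₂ (Int.castRingHom ℂ) u (frakP q) = 0 := by
    have h := evalFrakP q u
    rw [hz.pow_eq_one, sub_self, zero_mul] at h
    exact (mul_eq_zero.mp h).resolve_right
      (mul_ne_zero (ne _ (by omega) (by nlinarith)) (ne _ (by omega) (by nlinarith)))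
  have hp0 : eval₂ (Int.castRingHom ℂ) u (frakP p) ≠ 0 := by
    intro h0
    have h := evalFrakP p u
    rw [h0, zero_mul] at h
    have h1 := ne 1 (by omega) (by nlinarith)
    rw [pow_one] at h1
    exact mul_ne_zero (ne (p * (p + 1)) (Nat.mul_ne_zero (by omega) (by omega)) (by nlinarith)) h1 h.symm
  have hle : Ideal.span {frakP q ^ 2, (T 1 - 1) * frakP q} ≤
      RingHom.ker (eval₂ (Int.castRingHom ℂ) u) := by
    rw [Ideal.span_le]
    rintro x (rfl | rfl)
    · simp [RingHom.mem_ker, hq0]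
    · simp [RingHom.mem_ker, hq0]
  have hm : frakP p ^ 2 ∈ Ideal.span {frakP p ^ 2, (T 1 - 1) * frakP p} :=
    Ideal.subset_span (by simp)
  rw [hI] at hm
  have := hle hm
  rw [RingHom.mem_ker, map_pow] at this
  exact hp0 (pow_eq_zero_iff two_ne_zero |>.mp this)
end

section
/- For integers p and q with 2 ≤ p < q, the ℤ[t, t⁻¹]-modules M_p and M_q are not isomorphic, where for each integer r ≥ 2, M_r denotes the quotient of the free module ℤ[t, t⁻¹]² by the submodule generated by 𝔭_r(t)·e₁, 𝔭_r(t)·e₂, and (1 − t)·e₁ − (1 − t)·e₂ (with e₁, e₂ the standard basis). -/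
open LaurentPolynomial

/-- The standard basis vectors `e₁, e₂` of the free module `ℤ[t, t⁻¹]²`. -/
noncomputable def e1 : Fin 2 → LaurentPolynomial ℤ := Pi.single 0 1
noncomputable def e2 : Fin 2 → LaurentPolynomial ℤ := Pi.single 1 1

/-- The Alexander module `M_r`: the quotient of the free module `ℤ[t, t⁻¹]²` by
the submodule generated by `𝔭_r(t)·e₁`, `𝔭_r(t)·e₂` and `(1 − t)·e₁ − (1 − t)·e₂`. -/
noncomputable abbrev AlexanderModule (r : ℕ) :=
  (Fin 2 → LaurentPolynomial ℤ) ⧸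
    Submodule.span (LaurentPolynomial ℤ)
      ({frakP r • e1, frakP r • e2,
        ((1 : LaurentPolynomial ℤ) - T 1) • e1 - ((1 : LaurentPolynomial ℤ) - T 1) • e2} : Set (Fin 2 → LaurentPolynomial ℤ))

lemma frakP_eval_identity (p : ℕ) (z : ℂˣ) (f : LaurentPolynomial ℤ →+* ℂ)
    (hf : ∀ n : ℤ, f (T n) = ((z ^ n : ℂˣ) : ℂ)) :
    f (frakP p) * (((z : ℂ) ^ p - 1) * ((z : ℂ) ^ (p + 1) - 1)) =
      ((z : ℂ) ^ (p * (p + 1)) - 1) * ((z : ℂ) - 1) := by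
  have h1 : ∑ k ∈ Finset.range (p + 1), f (T ((p : ℤ) ^ 2 - (k : ℤ) * p)) =
      ∑ k ∈ Finset.range (p + 1), ((z : ℂ) ^ p) ^ k := by
    rw [← Finset.sum_range_reflect (fun k => ((z : ℂ) ^ p) ^ k)]
    refine Finset.sum_congr rfl fun k hk => ?_
    have hk' : k ≤ p := by simpa [Nat.lt_succ_iff] using hk
    have : (p : ℤ) ^ 2 - (k : ℤ) * p = ((p * (p + 1 - 1 - k) : ℕ) : ℤ) := by
      obtain ⟨m, rfl⟩ := Nat.exists_eq_add_of_le hk'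
      have : k + m + 1 - 1 - k = m := by omega
      rw [this]; push_cast; ring
    rw [hf, this, zpow_natCast, ← pow_mul]
    simp
  have h2 : ∑ k ∈ Finset.range p, f (T ((k : ℤ) * (p + 1) + 1)) =
      (z : ℂ) * ∑ k ∈ Finset.range p, ((z : ℂ) ^ (p + 1)) ^ k := by
    rw [Finset.mul_sum]
    refine Finset.sum_congr rfl fun k _ => ?_
    have : (k : ℤ) * (p + 1) + 1 = ((k * (p + 1) + 1 : ℕ) : ℤ) := by push_cast; ring
    rw [hf, this, zpow_natCast, ← pow_mul]
    push_cast
    ring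
  have g1 := geom_sum_mul ((z : ℂ) ^ p) (p + 1)
  have g2 := geom_sum_mul ((z : ℂ) ^ (p + 1)) p
  rw [← pow_mul] at g1 g2
  rw [mul_comm (p + 1) p] at g2
  rw [frakP, map_sub, map_sum, map_sum, h1, h2]
  linear_combination ((z : ℂ) ^ (p + 1) - 1) * g1 - (z : ℂ) * ((z : ℂ) ^ p - 1) * g2

lemma frakP_dvd_of_iso (p q : ℕ)
    (e : AlexanderModule p ≃ₗ[LaurentPolynomial ℤ] AlexanderModule q) :
    frakP q ∣ frakP p := by
  have hkill : ∀ x : AlexanderModule p, frakP p • x = 0 := by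
    intro x
    obtain ⟨v, rfl⟩ := Submodule.Quotient.mk_surjective _ x
    rw [← Submodule.Quotient.mk_smul, Submodule.Quotient.mk_eq_zero]
    have : frakP p • v = v 0 • (frakP p • e1) + v 1 • (frakP p • e2) := by
      funext i
      fin_cases i <;> simp [e1, e2, mul_comm]
    rw [this]
    exact Submodule.add_mem _
      (Submodule.smul_mem _ _ (Submodule.subset_span (by simp)))
      (Submodule.smul_mem _ _ (Submodule.subset_span (by simp)))
  have hq : ∀ y : AlexanderModule q, frakP p • y = 0 := by
    intro y
    have := hkill (e.symm y)
    rw [← map_smul] at this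
    exact (LinearEquiv.map_eq_zero_iff e.symm).mp this
  have h0 := hq (Submodule.Quotient.mk e1)
  rw [← Submodule.Quotient.mk_smul, Submodule.Quotient.mk_eq_zero] at h0
  have key : ∀ v ∈ Submodule.span (LaurentPolynomial ℤ)
      ({frakP q • e1, frakP q • e2,
        ((1 : LaurentPolynomial ℤ) - T 1) • e1 - ((1 : LaurentPolynomial ℤ) - T 1) • e2} :
          Set (Fin 2 → LaurentPolynomial ℤ)), frakP q ∣ v 0 + v 1 := by
    intro v hv
    induction hv using Submodule.span_induction with
    | mem x hx =>
      rcases hx with rfl | rfl | rfl <;> simp [e1, e2]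
    | zero => simp
    | add x y _ _ hx hy =>
      have := dvd_add hx hy
      simp only [Pi.add_apply]
      convert this using 1
      ring
    | smul a x _ hx =>
      simp only [Pi.smul_apply, smul_eq_mul, ← mul_add]
      exact hx.mul_left a
  simpa [e1] using key _ h0

/-- For `2 ≤ p < q`, the `ℤ[t, t⁻¹]`-modules `M_p` and `M_q` are not isomorphic. -/
theorem alexanderModules_not_isomorphic (p q : ℕ) (hp : 2 ≤ p) (hpq : p < q) :
    ¬ Nonempty (AlexanderModule p ≃ₗ[LaurentPolynomial ℤ] AlexanderModule q) := by
  rintro ⟨e⟩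
  obtain ⟨c, hc⟩ := frakP_dvd_of_iso p q e
  have hN : q * (q + 1) ≠ 0 := Nat.mul_ne_zero (by omega) (by omega)
  have hz := Complex.isPrimitiveRoot_exp (q * (q + 1)) hN
  set z := Complex.exp (2 * Real.pi * Complex.I / ((q * (q + 1) : ℕ) : ℂ)) with hzdef
  let u : ℂˣ := Units.mk0 z (Complex.exp_ne_zero _)
  let f : LaurentPolynomial ℤ →+* ℂ := LaurentPolynomial.eval₂ (Int.castRingHom ℂ) u
  have hf : ∀ n : ℤ, f (T n) = ((u ^ n : ℂˣ) : ℂ) := fun n => by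
    simp [f]
  have hu : (u : ℂ) = z := rfl
  have ne : ∀ m : ℕ, 0 < m → m < q * (q + 1) → z ^ m - 1 ≠ 0 := fun m h1 h2 =>
    sub_ne_zero.mpr (hz.pow_ne_one_of_pos_of_lt h1.ne' h2)
  have iq := frakP_eval_identity q u f hf
  have ip := frakP_eval_identity p u f hf
  rw [hu] at iq ip
  rw [hz.pow_eq_one, sub_self, zero_mul] at iq
  have fq : f (frakP q) = 0 := by
    rcases mul_eq_zero.mp iq with h | h
    · exact h
    · exact absurd h (mul_ne_zero (ne _ (by omega) (by nlinarith)) (ne _ (by omega) (by nlinarith)))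
  rw [hc, map_mul, fq, zero_mul, zero_mul] at ip
  have n1 := ne 1 (by omega) (by nlinarith)
  rw [pow_one] at n1
  exact mul_ne_zero (ne (p * (p + 1)) (by positivity) (by nlinarith)) n1 ip.symm
end
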